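/- Let m₁ and m₂ be n×n complex unitary matrices such that ‖m₁ − I‖ < 1/2 and ‖m₂ − I‖ < 1/2 in the ℓ²-operator norm. Define log(m) = Σ_{k=1}^∞ (−1)^{k+1}(m − I)ᵏ/k (this series converges for ‖m − I‖ < 1; note ‖m₁m₂ − I‖ < 1). Then Tr(log(m₁m₂)) = Tr(log(m₁)) + Tr(log(m₂)). -/

import Mathlib

noncomputable section

/-- The algebra of "n×n complex matrices" realized as bounded operators on `ℓ²(Fin n)`,
equipped with the ℓ²-operator norm. -/
abbrev Mat (n : ℕ) := EuclideanSpace ℂ (Fin n) →L[ℂ] EuclideanSpace ℂ (Fin n)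

/-- The logarithm defined as a power series centered at 1:
`log m = Σ_{k≥1} (−1)^{k+1}(m−1)ᵏ/k`. -/
def matLog {n : ℕ} (m : Mat n) : Mat n :=
  ∑' k : ℕ, ((-1 : ℂ) ^ k / (k + 1)) • (m - 1) ^ (k + 1)

/-- Trace of an operator. -/
def clmTrace {n : ℕ} (f : Mat n) : ℂ :=
  LinearMap.trace ℂ (EuclideanSpace ℂ (Fin n))
    (f : EuclideanSpace ℂ (Fin n) →ₗ[ℂ] EuclideanSpace ℂ (Fin n))

section Aux

variable {A : Type*} [NormedRing A] [NormedAlgebra ℂ A] [CompleteSpace A]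

/-- The series `τ (log (1 + x))`. -/
def auxL (τ : A →L[ℂ] ℂ) (x : A) : ℂ :=
  ∑' k : ℕ, ((-1 : ℂ) ^ k / (k + 1)) * τ (x ^ (k + 1))

theorem aux_term (τ : A →L[ℂ] ℂ) (hτ : ∀ a b, τ (a * b) = τ (b * a)) (k : ℕ) (x : A) :
    HasFDerivAt (fun y : A => ((-1 : ℂ) ^ k / (k + 1)) * τ (y ^ (k + 1)))
      (τ.comp (ContinuousLinearMap.mul ℂ A ((-x) ^ k))) x := by
  have h := ((τ.hasFDerivAt.comp x (hasFDerivAt_pow' (𝕜 := ℂ) (k + 1) (x := x))).const_mul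
    ((-1 : ℂ) ^ k / (k + 1)))
  refine h.congr_fderiv ?_
  ext v
  have hs : ∀ i ∈ Finset.range (k + 1), τ (x ^ (k - i) * (v * x ^ i)) = τ (x ^ k * v) := by
    intro i hi
    have hi' : i ≤ k := by simpa [Nat.lt_succ_iff] using hi
    rw [← mul_assoc, hτ, ← mul_assoc, ← pow_add, Nat.add_sub_cancel' hi']
  have hk : ((k : ℂ) + 1) ≠ 0 := by exact_mod_cast Nat.succ_ne_zero k
  have hn : (-x) ^ k = ((-1 : ℂ) ^ k) • x ^ k := by
    rw [← smul_pow]; simp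
  simp [hn, mul_assoc, Finset.sum_congr rfl hs]
  field_simp

theorem aux_deriv (τ : A →L[ℂ] ℂ) (hτ : ∀ a b, τ (a * b) = τ (b * a)) (h1 : ‖(1 : A)‖ ≤ 1)
    (x : A) (hx : ‖x‖ < 1) :
    HasFDerivAt (auxL τ) (τ.comp (ContinuousLinearMap.mul ℂ A (∑' k : ℕ, (-x) ^ k))) x := by
  obtain ⟨r, hxr, hr⟩ := exists_between hx
  have hr0 : 0 ≤ r := (norm_nonneg x).trans hxr.le
  have hpow : ∀ (k : ℕ) (y : A), ‖y‖ ≤ r → ‖y ^ k‖ ≤ r ^ k := by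
    intro k y hy
    induction k with
    | zero => simpa using h1
    | succ k ih =>
      rw [pow_succ, pow_succ]
      exact (norm_mul_le _ _).trans (mul_le_mul ih hy (norm_nonneg _) (by positivity))
  have h := hasFDerivAt_tsum_of_isPreconnected (𝕜 := ℂ)
    (f := fun (k : ℕ) (y : A) => ((-1 : ℂ) ^ k / (k + 1)) * τ (y ^ (k + 1)))
    (f' := fun k y => τ.comp (ContinuousLinearMap.mul ℂ A ((-y) ^ k)))
    (u := fun k : ℕ => ‖τ‖ * r ^ k) (s := Metric.ball (0 : A) r) (x₀ := 0) (x := x)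
    ((summable_geometric_of_lt_one hr0 hr).mul_left _) Metric.isOpen_ball
    (convex_ball (0 : A) r).isPreconnected
    (fun k y _ => aux_term τ hτ k y) ?_ ?_ ?_ ?_
  · refine h.congr_fderiv ?_
    have hsum : Summable (fun k : ℕ => (-x) ^ k) :=
      summable_geometric_of_norm_lt_one (by simpa using hx)
    rw [ContinuousLinearMap.map_tsum _ hsum]
    exact (ContinuousLinearMap.map_tsum (ContinuousLinearMap.compL ℂ A A ℂ τ)
      (ContinuousLinearMap.summable _ hsum)).symm
  · intro k y hy
    refine (ContinuousLinearMap.opNorm_comp_le _ _).trans ?_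
    refine mul_le_mul_of_nonneg_left ?_ (norm_nonneg _)
    refine (ContinuousLinearMap.opNorm_mul_apply_le ℂ A _).trans (hpow k _ ?_)
    simpa using (mem_ball_zero_iff.1 hy).le
  · exact Metric.mem_ball_self ((norm_nonneg x).trans_lt hxr)
  · simpa using summable_zero
  · simpa using hxr

theorem aux_inv (x : A) (hx : ‖x‖ < 1) :
    (∑' k : ℕ, (-x) ^ k) * (1 + x) = 1 ∧ (1 + x) * (∑' k : ℕ, (-x) ^ k) = 1 := by
  have h := geom_series_mul_neg (-x) (by simpa using hx)
  have h' := mul_neg_geom_series (-x) (by simpa using hx)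
  rw [sub_neg_eq_add] at h h'
  exact ⟨h, h'⟩

theorem aux_main (τ : A →L[ℂ] ℂ) (hτ : ∀ a b, τ (a * b) = τ (b * a)) (h1 : ‖(1 : A)‖ ≤ 1)
    (a b : A) (ha : ‖a‖ < 1) (hb : ‖b‖ < 1) (hab : ‖a + b‖ < 1) (hab' : ‖a + b + a * b‖ < 1) :
    auxL τ (a + b + a * b) = auxL τ a + auxL τ b := by
  let F : ℂ → ℂ := fun t => auxL τ (t • (a + b) + (t ^ 2) • (a * b)) - auxL τ (t • a)
    - auxL τ (t • b)
  have hsm : ∀ t : ℝ, t ∈ Set.Icc (0 : ℝ) 1 → ∀ c : A, ‖c‖ < 1 → ‖(t : ℂ) • c‖ < 1 := by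
    intro t ht c hc
    rw [norm_smul, Complex.norm_real, Real.norm_of_nonneg ht.1]
    nlinarith [ht.1, ht.2, norm_nonneg c]
  have hF : ∀ t : ℝ, t ∈ Set.Icc (0 : ℝ) 1 → HasDerivAt F 0 (t : ℂ) := by
    intro t ht
    have hta := hsm t ht a ha
    have htb := hsm t ht b hb
    have htp : ‖(t : ℂ) • (a + b) + ((t : ℂ) ^ 2) • (a * b)‖ < 1 := by
      have : (t : ℂ) • (a + b) + ((t : ℂ) ^ 2) • (a * b)
          = (t : ℂ) • (((1 - t : ℝ) : ℂ) • (a + b) + (t : ℂ) • (a + b + a * b)) := by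
        push_cast
        module
      rw [this]
      apply hsm t ht
      refine (norm_add_le _ _).trans_lt ?_
      rw [norm_smul, norm_smul, Complex.norm_real, Complex.norm_real, Real.norm_of_nonneg ht.1,
        Real.norm_of_nonneg (by linarith [ht.2])]
      rcases ht.1.eq_or_lt with h0 | h0
      · subst h0; simpa using hab
      · nlinarith [ht.2, mul_lt_mul_of_pos_left hab' h0,
          mul_le_mul_of_nonneg_left hab.le (by linarith [ht.2] : 0 ≤ 1 - t)]
    have d1 : HasDerivAt (fun s : ℂ => s • a) a (t : ℂ) := by
      simpa using (hasDerivAt_id (t : ℂ)).smul_const a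
    have d2 : HasDerivAt (fun s : ℂ => s • b) b (t : ℂ) := by
      simpa using (hasDerivAt_id (t : ℂ)).smul_const b
    have d3 : HasDerivAt (fun s : ℂ => s • (a + b) + (s ^ 2) • (a * b))
        ((a + b) + (2 * (t : ℂ)) • (a * b)) (t : ℂ) := by
      have e1 := (hasDerivAt_id (t : ℂ)).smul_const (a + b)
      have e2 := (hasDerivAt_pow 2 (t : ℂ)).smul_const (a * b)
      have e3 := e1.fun_add e2
      simp only [id, one_smul, Nat.cast_ofNat, Nat.add_one_sub_one, pow_one] at e3
      exact e3
    have D := (((aux_deriv τ hτ h1 _ htp).comp_hasDerivAt (t : ℂ) d3).sub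
      ((aux_deriv τ hτ h1 _ hta).comp_hasDerivAt (t : ℂ) d1)).sub
      ((aux_deriv τ hτ h1 _ htb).comp_hasDerivAt (t : ℂ) d2)
    refine D.congr_deriv ?_
    obtain ⟨p1, p2⟩ := aux_inv _ htp
    obtain ⟨u1, u2⟩ := aux_inv _ hta
    obtain ⟨v1, v2⟩ := aux_inv _ htb
    simp only [ContinuousLinearMap.comp_apply, ContinuousLinearMap.mul_apply']
    set P := ∑' k : ℕ, (-((t : ℂ) • (a + b) + ((t : ℂ) ^ 2) • (a * b))) ^ k
    set U := ∑' k : ℕ, (-((t : ℂ) • a)) ^ k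
    set V := ∑' k : ℕ, (-((t : ℂ) • b)) ^ k
    have hfac : 1 + ((t : ℂ) • (a + b) + ((t : ℂ) ^ 2) • (a * b))
        = (1 + (t : ℂ) • a) * (1 + (t : ℂ) • b) := by
      simp only [mul_add, add_mul, one_mul, mul_one, smul_mul_smul_comm, smul_add, sq]
      abel
    have hder : (a + b) + (2 * (t : ℂ)) • (a * b)
        = a * (1 + (t : ℂ) • b) + (1 + (t : ℂ) • a) * b := by
      simp only [mul_add, add_mul, one_mul, mul_one, smul_mul_assoc, mul_smul_comm, two_mul,
        add_smul]
      abel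
    rw [hfac] at p1
    set X := 1 + (t : ℂ) • a
    set Y := 1 + (t : ℂ) • b
    have hP : P = V * U := by
      calc P = P * (X * (Y * V) * U) := by rw [v2, mul_one, u2, mul_one]
        _ = (P * (X * Y)) * (V * U) := by simp only [mul_assoc]
        _ = V * U := by rw [p1, one_mul]
    rw [hder, mul_add, map_add, hP]
    have q1 : τ (V * U * (a * Y)) = τ (U * a) := by
      rw [← mul_assoc, hτ, mul_assoc V, ← mul_assoc, v2, one_mul]
    have q2 : τ (V * U * (X * b)) = τ (V * b) := by
      rw [mul_assoc, ← mul_assoc U, u1, one_mul]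
    rw [q1, q2]
    ring
  have hconst := constant_of_has_deriv_right_zero (f := fun t : ℝ => F t) (a := 0) (b := 1)
    (fun t ht => (hF t ht).comp_ofReal.continuousAt.continuousWithinAt)
    (fun t ht => (hF t ⟨ht.1, ht.2.le⟩).comp_ofReal.hasDerivWithinAt) 1 (by simp)
  have h0 : auxL τ (0 : A) = 0 := by simp [auxL]
  simp only [F, Complex.ofReal_one, Complex.ofReal_zero, one_smul, one_pow, zero_smul, h0] at hconst
  simp [h0] at hconst
  linear_combination hconst

theorem aux_log (τ : A →L[ℂ] ℂ) (x : A) (hx : ‖x‖ < 1) :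
    τ (∑' k : ℕ, ((-1 : ℂ) ^ k / (k + 1)) • x ^ (k + 1)) = auxL τ x := by
  have hs : Summable (fun k : ℕ => ((-1 : ℂ) ^ k / (k + 1)) • x ^ (k + 1)) := by
    refine Summable.of_norm_bounded (g := fun k : ℕ => ‖x‖ ^ (k + 1))
      ((summable_nat_add_iff 1).2 (summable_geometric_of_lt_one (norm_nonneg x) hx)) ?_
    intro k
    refine (norm_smul_le _ _).trans ?_
    have h2 : ‖x ^ (k + 1)‖ ≤ ‖x‖ ^ (k + 1) := norm_pow_le' x (Nat.succ_pos k)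
    have h3 : ‖((-1 : ℂ) ^ k / (k + 1))‖ ≤ 1 := by
      have : ‖(k : ℂ) + 1‖ = k + 1 := by exact_mod_cast Complex.norm_natCast (k + 1)
      rw [norm_div, norm_pow, norm_neg, norm_one, one_pow, this]
      rw [div_le_one (by positivity)]
      linarith [(Nat.cast_nonneg k : (0 : ℝ) ≤ k)]
    calc _ ≤ 1 * ‖x‖ ^ (k + 1) := mul_le_mul h3 h2 (norm_nonneg _) zero_le_one
      _ = _ := one_mul _
  rw [ContinuousLinearMap.map_tsum _ hs]
  simp [auxL]

end Aux

/-- The trace as a continuous functional. -/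
def auxTr (n : ℕ) : Mat n →L[ℂ] ℂ :=
  LinearMap.toContinuousLinearMap
    ((LinearMap.trace ℂ (EuclideanSpace ℂ (Fin n))).comp (ContinuousLinearMap.coeLM ℂ))

/-- For unitaries `m₁`, `m₂` with `‖mᵢ − 1‖ < 1/2` (ℓ²-operator norm),
`Tr(log(m₁m₂)) = Tr(log m₁) + Tr(log m₂)`. -/
theorem stmt16 {n : ℕ} (m₁ m₂ : Mat n)
    (hu₁ : m₁ ∈ unitary (Mat n)) (hu₂ : m₂ ∈ unitary (Mat n))
    (h₁ : ‖m₁ - 1‖ < 1 / 2) (h₂ : ‖m₂ - 1‖ < 1 / 2) :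
    clmTrace (matLog (m₁ * m₂)) = clmTrace (matLog m₁) + clmTrace (matLog m₂) := by
  have hT : ∀ f : Mat n, clmTrace f = auxTr n f := fun f => rfl
  have hτ : ∀ a b : Mat n, auxTr n (a * b) = auxTr n (b * a) := fun a b =>
    LinearMap.trace_mul_comm ℂ (a : EuclideanSpace ℂ (Fin n) →ₗ[ℂ] EuclideanSpace ℂ (Fin n)) b
  have h1 : ‖(1 : Mat n)‖ ≤ 1 := ContinuousLinearMap.norm_id_le
  have hab : ‖(m₁ - 1) + (m₂ - 1)‖ < 1 := (norm_add_le _ _).trans_lt (by linarith)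
  have e : m₁ * m₂ - 1 = (m₁ - 1) + (m₂ - 1) + (m₁ - 1) * (m₂ - 1) := by
      simp only [mul_sub, sub_mul, mul_one, one_mul]; abel
  have hab' : ‖m₁ * m₂ - 1‖ < 1 := by
    have e' : m₁ * m₂ - 1 = m₁ * (m₂ - 1) + (m₁ - 1) := by
      simp only [mul_sub, sub_mul, mul_one, one_mul]; abel
    rw [e']
    refine (norm_add_le _ _).trans_lt ?_
    rw [CStarRing.norm_mem_unitary_mul (m₂ - 1) hu₁]
    linarith
  rw [hT, hT, hT, matLog, matLog, matLog, aux_log _ _ hab', aux_log _ _ (by linarith),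
    aux_log _ _ (by linarith), e]
  exact aux_main _ hτ h1 _ _ (by linarith) (by linarith) hab (e ▸ hab')
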